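/- Let G = ([n],H) be a finite q-uniform hypergraph (q ≥ 2) with non-backtracking matrix B, edge reversal matrix P (which is invertible, since P² = (q−2)P + (q−1)I), adjacency matrix A and degree matrix D. Let v be an eigenvector of B with eigenvalue λ ∉ {1, −(q−1)}. Define v_in, v_out ∈ ℂ^n by v_in(i) = Σ_{e ∈ H, i ∈ e} [P^{−1}v](i→e) and v_out(i) = Σ_{e ∈ H, i ∈ e} v(i→e). Then the vector v′ = (v_in, v_out) ∈ ℂ^{2n} is nonzero and is an eigenvector of the 2n × 2n matrix B̃ = [[0, D − I],[−(q−1)I, A − (q−2)I]] with the same eigenvalue λ. -/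

import Mathlib

open scoped BigOperators Matrix

namespace HypergraphNB

variable {n : ℕ}

/-- The type of oriented hyperedges `v → e` of a hypergraph with hyperedge set `H`. -/
def OEdge (H : Finset (Finset (Fin n))) : Type _ :=
  {a : Fin n × Finset (Fin n) // a.2 ∈ H ∧ a.1 ∈ a.2}

noncomputable instance (H : Finset (Finset (Fin n))) : Fintype (OEdge H) := by
  unfold OEdge; infer_instance

instance (H : Finset (Finset (Fin n))) : DecidableEq (OEdge H) := by
  unfold OEdge; exact Subtype.instDecidableEq

/-- The non-backtracking matrix `B` (over `ℂ`). -/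
def nbMatrix (H : Finset (Finset (Fin n))) : Matrix (OEdge H) (OEdge H) ℂ :=
  fun a b => if b.1.1 ∈ a.1.2 ∧ b.1.1 ≠ a.1.1 ∧ b.1.2 ≠ a.1.2 then 1 else 0

/-- The edge reversal matrix `P` (over `ℂ`). -/
def revMatrix (H : Finset (Finset (Fin n))) : Matrix (OEdge H) (OEdge H) ℂ :=
  fun a b => if a.1.2 = b.1.2 ∧ a.1.1 ≠ b.1.1 then 1 else 0

/-- The adjacency matrix `A` (over `ℂ`). -/
def adjMatrix (H : Finset (Finset (Fin n))) : Matrix (Fin n) (Fin n) ℂ :=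
  fun i j => if i ≠ j then ((H.filter (fun e => i ∈ e ∧ j ∈ e)).card : ℂ) else 0

/-- The diagonal degree matrix `D` (over `ℂ`). -/
def degMatrix (H : Finset (Finset (Fin n))) : Matrix (Fin n) (Fin n) ℂ :=
  Matrix.diagonal (fun i => ((H.filter (fun e => i ∈ e)).card : ℂ))

/-- The reduced `2n × 2n` matrix `B̃ = [[0, D − I], [−(q−1)I, A − (q−2)I]]`. -/
def redMatrix (q : ℕ) (H : Finset (Finset (Fin n))) :
    Matrix (Fin n ⊕ Fin n) (Fin n ⊕ Fin n) ℂ :=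
  Matrix.fromBlocks 0 (degMatrix H - 1)
    (-(((q : ℂ) - 1) • (1 : Matrix (Fin n) (Fin n) ℂ)))
    (adjMatrix H - ((q : ℂ) - 2) • (1 : Matrix (Fin n) (Fin n) ℂ))

/-- `v_in(i) = Σ_{e ∈ H, i ∈ e} [P⁻¹ v](i→e)`. -/
noncomputable def vIn (H : Finset (Finset (Fin n))) (v : OEdge H → ℂ) : Fin n → ℂ :=
  fun i => ∑ a : OEdge H, if a.1.1 = i then ((revMatrix H)⁻¹).mulVec v a else 0

/-- `v_out(i) = Σ_{e ∈ H, i ∈ e} v(i→e)`. -/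
noncomputable def vOut (H : Finset (Finset (Fin n))) (v : OEdge H → ℂ) : Fin n → ℂ :=
  fun i => ∑ a : OEdge H, if a.1.1 = i then v a else 0

/-- Sum over oriented hyperedges of a function of the underlying pair. -/
theorem sum_oedge (H : Finset (Finset (Fin n))) (f : Fin n → Finset (Fin n) → ℂ) :
    ∑ a : OEdge H, f a.1.1 a.1.2 = ∑ i, ∑ e ∈ H, if i ∈ e then f i e else 0 := by
  have h1 : ∑ a : OEdge H, f a.1.1 a.1.2 =
      ∑ p ∈ (Finset.univ ×ˢ H).filter (fun p : Fin n × Finset (Fin n) => p.1 ∈ p.2),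
        f p.1 p.2 := by
    refine Finset.sum_bij (fun a _ => a.1) ?_ ?_ ?_ ?_
    · intro a _
      have := a.2
      simp [this.1, this.2]
    · intro a _ b _ h
      exact Subtype.ext h
    · intro p hp
      simp only [Finset.mem_filter, Finset.mem_product] at hp
      exact ⟨⟨p, hp.1.2, hp.2⟩, Finset.mem_univ _, rfl⟩
    · intro a _
      rfl
  rw [h1, Finset.sum_filter, Finset.sum_product]

theorem sum_tail (H : Finset (Finset (Fin n))) (i : Fin n) (g : Finset (Fin n) → ℂ) :
    ∑ a : OEdge H, (if a.1.1 = i then g a.1.2 else 0) = ∑ e ∈ H, if i ∈ e then g e else 0 := by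
  rw [sum_oedge H (fun j e => if j = i then g e else 0), Finset.sum_eq_single i]
  · simp
  · intro j _ hj
    simp [hj]
  · simp

theorem sum_head (H : Finset (Finset (Fin n))) (e : Finset (Fin n)) (he : e ∈ H)
    (g : Fin n → ℂ) :
    ∑ a : OEdge H, (if a.1.2 = e then g a.1.1 else 0) = ∑ j, if j ∈ e then g j else 0 := by
  rw [sum_oedge H (fun j f => if f = e then g j else 0)]
  refine Finset.sum_congr rfl fun j _ => ?_
  rw [Finset.sum_eq_single e]
  · simp
  · intro f _ hf
    simp [hf]
  · intro h
    exact absurd he h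

/-- The block all-ones matrix. -/
def sameEdge (H : Finset (Finset (Fin n))) : Matrix (OEdge H) (OEdge H) ℂ :=
  fun a b => if a.1.2 = b.1.2 then 1 else 0

theorem revMatrix_eq (H : Finset (Finset (Fin n))) : revMatrix H = sameEdge H - 1 := by
  ext a b
  simp only [revMatrix, sameEdge, Matrix.sub_apply, Matrix.one_apply]
  have : a = b ↔ a.1.1 = b.1.1 ∧ a.1.2 = b.1.2 :=
    ⟨fun h => by simp [h], fun h => Subtype.ext (Prod.ext h.1 h.2)⟩
  by_cases h1 : a.1.1 = b.1.1 <;> by_cases h2 : a.1.2 = b.1.2 <;> simp [this, h1, h2]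

theorem sameEdge_sq (q : ℕ) (H : Finset (Finset (Fin n))) (hu : ∀ e ∈ H, e.card = q) :
    sameEdge H * sameEdge H = (q : ℂ) • sameEdge H := by
  ext a b
  simp only [sameEdge, Matrix.mul_apply, Matrix.smul_apply, smul_eq_mul]
  have h := sum_head H a.1.2 a.2.1 (fun _ => if a.1.2 = b.1.2 then (1 : ℂ) else 0)
  have h2 : ∑ j, (if j ∈ a.1.2 then (if a.1.2 = b.1.2 then (1 : ℂ) else 0) else 0)
      = (q : ℂ) * if a.1.2 = b.1.2 then (1 : ℂ) else 0 := by
    rw [← Finset.sum_filter, Finset.sum_const, nsmul_eq_mul]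
    simp [hu _ a.2.1]
  rw [← h2, ← h]
  refine Finset.sum_congr rfl fun c _ => ?_
  by_cases hc : c.1.2 = a.1.2
  · simp [hc]
  · simp [hc, Ne.symm hc]

theorem revMatrix_sq (q : ℕ) (H : Finset (Finset (Fin n))) (hu : ∀ e ∈ H, e.card = q) :
    revMatrix H * revMatrix H = ((q : ℂ) - 2) • revMatrix H + ((q : ℂ) - 1) • 1 := by
  rw [revMatrix_eq, sub_mul, mul_sub, sameEdge_sq q H hu]
  simp only [mul_one, one_mul]
  module

theorem rev_mulVec_tail (H : Finset (Finset (Fin n))) (g : Fin n → ℂ) (a : OEdge H) :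
    (revMatrix H).mulVec (fun b => g b.1.1) a =
      ∑ j, if j ∈ a.1.2 ∧ j ≠ a.1.1 then g j else 0 := by
  have h := sum_head H a.1.2 a.2.1 (fun j => if j ≠ a.1.1 then g j else 0)
  simp only [ite_and]
  rw [← h]
  simp only [Matrix.mulVec, dotProduct, revMatrix]
  refine Finset.sum_congr rfl fun c _ => ?_
  by_cases h1 : c.1.1 = a.1.1 <;> by_cases h2 : c.1.2 = a.1.2 <;>
    simp [h1, h2, eq_comm (a := a.1.1), eq_comm (a := a.1.2)]

theorem nb_mulVec (H : Finset (Finset (Fin n))) (v : OEdge H → ℂ) :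
    (nbMatrix H).mulVec v =
      (revMatrix H).mulVec (fun b => vOut H v b.1.1) - (revMatrix H).mulVec v := by
  ext a
  rw [Pi.sub_apply, rev_mulVec_tail]
  have h : ∑ j, (if j ∈ a.1.2 ∧ j ≠ a.1.1 then vOut H v j else 0) =
      ∑ b : OEdge H, if b.1.1 ∈ a.1.2 ∧ b.1.1 ≠ a.1.1 then v b else 0 := by
    have h1 : ∀ j, (if j ∈ a.1.2 ∧ j ≠ a.1.1 then vOut H v j else 0) =
        ∑ b : OEdge H, if b.1.1 = j then
          (if b.1.1 ∈ a.1.2 ∧ b.1.1 ≠ a.1.1 then v b else 0) else 0 := by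
      intro j
      by_cases hj : j ∈ a.1.2 ∧ j ≠ a.1.1
      · rw [if_pos hj, vOut]
        refine Finset.sum_congr rfl fun b _ => ?_
        by_cases hb : b.1.1 = j
        · rw [if_pos hb, if_pos hb, hb, if_pos hj]
        · rw [if_neg hb, if_neg hb]
      · rw [if_neg hj]
        symm
        refine Finset.sum_eq_zero fun b _ => ?_
        by_cases hb : b.1.1 = j
        · rw [if_pos hb, hb, if_neg hj]
        · rw [if_neg hb]
    rw [Finset.sum_congr rfl fun j _ => h1 j, Finset.sum_comm]
    simp
  rw [h]
  simp only [Matrix.mulVec, dotProduct, revMatrix, nbMatrix]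
  rw [← Finset.sum_sub_distrib]
  refine Finset.sum_congr rfl fun b _ => ?_
  have hb := b.2.2
  by_cases h2 : b.1.2 = a.1.2
  · rw [h2] at hb
    by_cases h1 : b.1.1 = a.1.1
    · simp [h1]
    · simp [h1, h2, hb, Ne.symm h1]
  · simp [h2, Ne.symm h2]

theorem vOut_rev_tail (H : Finset (Finset (Fin n))) (g : Fin n → ℂ) :
    vOut H ((revMatrix H).mulVec (fun b => g b.1.1)) = (adjMatrix H).mulVec g := by
  ext i
  have h : vOut H ((revMatrix H).mulVec (fun b => g b.1.1)) i =
      ∑ a : OEdge H, if a.1.1 = i then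
        (∑ j, if j ∈ a.1.2 ∧ j ≠ i then g j else 0) else 0 := by
    rw [vOut]
    refine Finset.sum_congr rfl fun a _ => ?_
    by_cases ha : a.1.1 = i
    · rw [if_pos ha, if_pos ha, rev_mulVec_tail, ha]
    · rw [if_neg ha, if_neg ha]
  rw [h, sum_tail H i (fun e => ∑ j, if j ∈ e ∧ j ≠ i then g j else 0),
    ← Finset.sum_filter, Finset.sum_comm]
  simp only [Matrix.mulVec, dotProduct, adjMatrix]
  refine Finset.sum_congr rfl fun j _ => ?_
  by_cases hj : j = i
  · simp [hj]
  · simp only [hj, Ne.symm hj, ne_eq, not_false_eq_true, and_true, if_true]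
    rw [← Finset.sum_filter, Finset.filter_filter, Finset.sum_const, nsmul_eq_mul]

theorem vOut_tail (H : Finset (Finset (Fin n))) (g : Fin n → ℂ) :
    vOut H (fun b => g b.1.1) = (degMatrix H).mulVec g := by
  ext i
  rw [degMatrix, Matrix.mulVec_diagonal, vOut]
  have h := sum_tail H i (fun _ => g i)
  rw [← Finset.sum_filter (s := H), Finset.sum_const, nsmul_eq_mul] at h
  rw [← h]
  refine Finset.sum_congr rfl fun a _ => ?_
  by_cases ha : a.1.1 = i
  · simp [ha]
  · simp [ha]

theorem vOut_add (H : Finset (Finset (Fin n))) (v w : OEdge H → ℂ) :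
    vOut H (v + w) = vOut H v + vOut H w := by
  ext i
  simp only [vOut, Pi.add_apply, ← Finset.sum_add_distrib]
  refine Finset.sum_congr rfl fun a _ => ?_
  split_ifs <;> simp

theorem vOut_smul (H : Finset (Finset (Fin n))) (c : ℂ) (v : OEdge H → ℂ) :
    vOut H (c • v) = c • vOut H v := by
  ext i
  simp only [vOut, Pi.smul_apply, smul_eq_mul, Finset.mul_sum]
  refine Finset.sum_congr rfl fun a _ => ?_
  split_ifs <;> simp

/-- If `v` is an eigenvector of `B` with eigenvalue `λ ∉ {1, −(q−1)}`, then
`v′ = (v_in, v_out)` is nonzero and is an eigenvector of `B̃` with the same eigenvalue. -/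
theorem eigenvector_reduction (q : ℕ) (hq : 2 ≤ q) (H : Finset (Finset (Fin n)))
    (huniform : ∀ e ∈ H, e.card = q)
    (lam : ℂ) (hlam1 : lam ≠ 1) (hlam2 : lam ≠ -((q : ℂ) - 1))
    (v : OEdge H → ℂ) (hv : v ≠ 0) (heig : (nbMatrix H).mulVec v = lam • v) :
    Sum.elim (vIn H v) (vOut H v) ≠ 0 ∧
      (redMatrix q H).mulVec (Sum.elim (vIn H v) (vOut H v)) =
        lam • Sum.elim (vIn H v) (vOut H v) := by
  have hq1 : (q : ℂ) - 1 ≠ 0 := by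
    rw [sub_ne_zero]
    exact_mod_cast (by omega : q ≠ 1)
  have hsq := revMatrix_sq q H huniform
  have hunit : IsUnit (revMatrix H).det := by
    refine (Matrix.isUnit_iff_isUnit_det _).1 (IsUnit.of_mul_eq_one
      (((q : ℂ) - 1)⁻¹ • (revMatrix H - ((q : ℂ) - 2) • 1)) ?_)
    rw [mul_smul_comm, mul_sub, hsq, mul_smul_comm, mul_one, add_sub_cancel_left, smul_smul,
      inv_mul_cancel₀ hq1, one_smul]
  obtain ⟨w, hw⟩ : ∃ w, w = ((revMatrix H)⁻¹).mulVec v := ⟨_, rfl⟩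
  have hPw : (revMatrix H).mulVec w = v := by
    rw [hw, Matrix.mulVec_mulVec, Matrix.mul_nonsing_inv _ hunit, Matrix.one_mulVec]
  have hin : vIn H v = vOut H w := by
    rw [hw]
    rfl
  have hPv : (revMatrix H).mulVec v = ((q : ℂ) - 2) • v + ((q : ℂ) - 1) • w := by
    conv_lhs => rw [← hPw]
    rw [Matrix.mulVec_mulVec, hsq, Matrix.add_mulVec, Matrix.smul_mulVec, Matrix.smul_mulVec,
      hPw, Matrix.one_mulVec]
  -- the key relation: out(i) = v(i→e) + λ w(i→e)
  have hkey : (fun b : OEdge H => vOut H v b.1.1) = v + lam • w := by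
    have h0 := heig
    rw [nb_mulVec] at h0
    have h1 : (revMatrix H).mulVec (fun b => vOut H v b.1.1) =
        (revMatrix H).mulVec (v + lam • w) := by
      rw [Matrix.mulVec_add, Matrix.mulVec_smul, hPw, ← h0]
      abel
    have h2 := congrArg ((revMatrix H)⁻¹).mulVec h1
    simpa only [Matrix.mulVec_mulVec, Matrix.nonsing_inv_mul _ hunit, Matrix.one_mulVec] using h2
  have hrow1 : (degMatrix H).mulVec (vOut H v) = vOut H v + lam • vOut H w := by
    rw [← vOut_tail, hkey, vOut_add, vOut_smul]
  have hrow2 : (adjMatrix H).mulVec (vOut H v) =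
      ((q : ℂ) - 2) • vOut H v + ((q : ℂ) - 1) • vOut H w + lam • vOut H v := by
    rw [← vOut_rev_tail, hkey, Matrix.mulVec_add, Matrix.mulVec_smul, hPw, hPv, vOut_add,
      vOut_add, vOut_smul, vOut_smul, vOut_smul]
  rw [hin]
  constructor
  · intro h0
    have hout : vOut H v = 0 := by
      ext i
      exact congrFun h0 (Sum.inr i)
    have hvw : v = -(lam • w) := by
      rw [hout] at hkey
      exact eq_neg_of_add_eq_zero_left hkey.symm
    have hPv2 : (revMatrix H).mulVec v = -(lam • v) := by
      conv_lhs => rw [hvw]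
      rw [Matrix.mulVec_neg, Matrix.mulVec_smul, hPw]
    rw [hPv] at hPv2
    have hw0 : ((lam - 1) * (lam + ((q : ℂ) - 1))) • w = 0 := by
      rw [hvw] at hPv2
      ext a
      have := congrFun hPv2 a
      simp only [Pi.add_apply, Pi.smul_apply, Pi.neg_apply, smul_eq_mul, Pi.zero_apply] at this ⊢
      linear_combination -this
    rcases smul_eq_zero.1 hw0 with hc | hc
    · rcases mul_eq_zero.1 hc with hc | hc
      · exact hlam1 (sub_eq_zero.1 hc)
      · exact hlam2 (eq_neg_of_add_eq_zero_left hc)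
    · apply hv
      rw [hvw, hc]
      simp
  · rw [redMatrix, Matrix.fromBlocks_mulVec]
    simp only [Sum.elim_comp_inl, Sum.elim_comp_inr, Matrix.zero_mulVec, Matrix.sub_mulVec,
      Matrix.neg_mulVec, Matrix.smul_mulVec, Matrix.one_mulVec, hrow1, hrow2]
    ext i
    rcases i with i | i
    · simp
    · simp only [Sum.elim_inr, Pi.add_apply, Pi.smul_apply, Pi.neg_apply, Pi.sub_apply,
        smul_eq_mul]
      ring

end HypergraphNB
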